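/- Let G be a simple graph whose girth is greater than 6, i.e. every cycle in G has length at least 7. Let u and v be distinct vertices of G joined by a path p of length at most 4. Then every vertex w that is adjacent to both u and v lies on the path p. -/

import Mathlib

/-- In a simple graph of girth greater than 6, any common neighbor of two distinct
vertices joined by a path of length at most 4 lies on that path. -/
theorem stmt16 {V : Type*} (G : SimpleGraph V) (hgirth : 6 < G.girth)
    (u v : V) (huv : u ≠ v) (p : G.Walk u v) (hp : p.IsPath) (hlen : p.length ≤ 4) :
    ∀ w : V, G.Adj u w → G.Adj v w → w ∈ p.support := by
  intro w huw hvw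
  by_contra hw
  have hc : (SimpleGraph.Walk.cons huw.symm (p.concat hvw)).IsCycle := by
    rw [SimpleGraph.Walk.cons_isCycle_iff]
    refine ⟨hp.concat hw hvw, ?_⟩
    rw [SimpleGraph.Walk.edges_concat, List.concat_eq_append, List.mem_append]
    rintro (h | h)
    · exact hw (p.fst_mem_support_of_mem_edges h)
    · rw [List.mem_singleton, Sym2.eq_iff] at h
      rcases h with ⟨_, h⟩ | ⟨_, h⟩
      · exact huw.ne h
      · exact huv h
  have h1 := SimpleGraph.egirth_le_length hc
  have h2 := ENat.toNat_le_of_le_coe h1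
  simp only [SimpleGraph.Walk.length_cons, SimpleGraph.Walk.length_concat] at h2
  unfold SimpleGraph.girth at hgirth
  omega
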